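/- Let n > 1 be an odd integer, let φ denote the Euler totient function, let d = gcd(n - 1, φ(n)), and let m = 2^{v_2(4·φ(n)) - 2·v_2(d)} · d^2. If cosocle(m) > rad(n), then (1, n^{φ(n)·k} - 1, n^{φ(n)·k}) is an abc triple for each positive integer k. -/

import Mathlib

open scoped Classical

/-- The radical of a natural number: the product of its distinct prime factors. -/
def rad (n : ℕ) : ℕ := ∏ p ∈ n.primeFactors, p

/-- The cosocle of a natural number: `n / rad n`. -/
def cosocle (n : ℕ) : ℕ := n / rad n

/-- `(a, b, c)` is an abc triple: `a, b, c` are relatively prime positive integers with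
`a + b = c` and `rad (a*b*c) < c`. -/
def IsABCTriple (a b c : ℕ) : Prop :=
  0 < a ∧ 0 < b ∧ 0 < c ∧ a + b = c ∧
    Nat.Coprime a b ∧ Nat.Coprime a c ∧ Nat.Coprime b c ∧ rad (a * b * c) < c

/-!
Write `c = n ^ (φ(n) * k)`. If `m ∣ c - 1`, then `rad (c - 1) * cosocle m` divides `c - 1`, so that
`rad n < cosocle m` gives `rad ((c - 1) * c) ≤ rad (c - 1) * rad n < c`. To see that `m` divides
`c - 1`, put `e = φ(n)`, which is even; then `m` is the product of the coprime factors
`2 ^ (v₂(e) + 2)` and the square of the odd part of `d = gcd (n - 1) e`. The first divides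
`n ^ e - 1` by lifting the exponent. So does `d ^ 2`, because
`n ^ e - 1 = (n - 1) * (1 + n + ⋯ + n ^ (e - 1))` and the sum is congruent to `e` modulo `n - 1`.
-/

open UniqueFactorizationMonoid (radical radical_pow radical_dvd_self radical_mul_dvd)

lemma rad_eq_radical (n : ℕ) : rad n = radical n :=
  Nat.radical_eq_prod_primeFactors.symm

lemma rad_pos (n : ℕ) : 0 < rad n := by
  rw [rad_eq_radical]
  exact Nat.radical_pos n

lemma rad_dvd_self (n : ℕ) : rad n ∣ n := by
  rw [rad_eq_radical]
  exact radical_dvd_self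

lemma rad_pow (n : ℕ) {k : ℕ} (hk : k ≠ 0) : rad (n ^ k) = rad n := by
  rw [rad_eq_radical, rad_eq_radical, radical_pow n hk]

lemma rad_mul_dvd (a b : ℕ) : rad (a * b) ∣ rad a * rad b := by
  simp only [rad_eq_radical]
  exact radical_mul_dvd

lemma rad_mul_le (a b : ℕ) : rad (a * b) ≤ rad a * rad b :=
  Nat.le_of_dvd (mul_pos (rad_pos a) (rad_pos b)) (rad_mul_dvd a b)

lemma rad_mul_cosocle (n : ℕ) : rad n * cosocle n = n :=
  Nat.mul_div_cancel' (rad_dvd_self n)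

lemma rad_mul_cosocle_dvd_of_dvd {m N : ℕ} (h : m ∣ N) : rad N * cosocle m ∣ N := by
  obtain ⟨t, rfl⟩ := h
  calc rad (m * t) * cosocle m
      ∣ rad m * t * cosocle m :=
        mul_dvd_mul_right ((rad_mul_dvd m t).trans (mul_dvd_mul_left _ (rad_dvd_self t))) _
    _ = m * t := by rw [mul_right_comm, rad_mul_cosocle]

lemma isABCTriple_one_sub_one {m c : ℕ} (hc : 1 < c) (hm : m ∣ c - 1) (hrad : rad c < cosocle m) :
    IsABCTriple 1 (c - 1) c := by
  have hcoprime : Nat.Coprime (c - 1) c :=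
    (Nat.coprime_self_sub_left hc.le).2 (Nat.coprime_one_left c)
  have hrad_lt : rad ((c - 1) * c) < c :=
    calc rad ((c - 1) * c)
        ≤ rad (c - 1) * rad c := rad_mul_le _ _
      _ ≤ rad (c - 1) * cosocle m := Nat.mul_le_mul_left _ hrad.le
      _ ≤ c - 1 := Nat.le_of_dvd (by lia) (rad_mul_cosocle_dvd_of_dvd hm)
      _ < c := by lia
  exact ⟨one_pos, by lia, by lia, by lia, Nat.coprime_one_left _, Nat.coprime_one_left _, hcoprime,
    by rwa [one_mul]⟩

lemma sq_dvd_pow_sub_pow {R : Type*} [CommRing R] {x y r : R} {e : ℕ}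
    (hxy : r ∣ x - y) (he : r ∣ (e : R)) : r ^ 2 ∣ x ^ e - y ^ e := by
  have hsum : r ∣ ∑ i ∈ Finset.range e, x ^ i * y ^ (e - 1 - i) :=
    (dvd_geom_sum₂_iff_of_dvd_sub hxy).2 (he.mul_right _)
  rw [← geom_sum₂_mul, sq]
  exact mul_dvd_mul hsum hxy

lemma gcd_sub_sq_dvd_pow_sub_pow (x y e : ℕ) : (x - y).gcd e ^ 2 ∣ x ^ e - y ^ e := by
  obtain hxy | hyx := le_total x y
  · rw [Nat.sub_eq_zero_of_le (Nat.pow_le_pow_left hxy e)]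
    exact dvd_zero _
  · have hdvd_sub : (((x - y).gcd e : ℕ) : ℤ) ∣ x - y := by
      rw [← Nat.cast_sub hyx]
      exact Int.natCast_dvd_natCast.2 (Nat.gcd_dvd_left _ _)
    have hdvd_exp : (((x - y).gcd e : ℕ) : ℤ) ∣ (e : ℤ) :=
      Int.natCast_dvd_natCast.2 (Nat.gcd_dvd_right _ _)
    zify [Nat.pow_le_pow_left hyx e]
    exact sq_dvd_pow_sub_pow hdvd_sub hdvd_exp

lemma two_pow_padicValNat_four_mul_dvd_pow_sub_one {n e : ℕ} (hn : 1 < n) (hodd : Odd n)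
    (he0 : e ≠ 0) (he : Even e) : 2 ^ padicValNat 2 (4 * e) ∣ n ^ e - 1 := by
  have hval : padicValNat 2 (4 * e) = padicValNat 2 e + 2 := by
    rw [show 4 * e = e * 2 ^ 2 by ring, padicValNat.mul he0 (by norm_num), padicValNat.prime_pow]
  rw [hval]
  exact (padicValNat_dvd_iff_le (Nat.sub_ne_zero_of_lt (Nat.one_lt_pow he0 hn))).2
    (padicValNat.pow_two_sub_one_ge hn hodd.not_two_dvd_nat he0 he)

lemma mul_pow_div_pow_mul_padicValNat {p : ℕ} (hp : p.Prime) (a d k : ℕ) :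
    a * d ^ k / p ^ (k * padicValNat p d) = a * ordCompl[p] d ^ k := by
  rw [← Nat.factorization_def d hp, pow_mul',
    Nat.mul_div_assoc a (pow_dvd_pow_of_dvd (Nat.ordProj_dvd d p) k),
    ← Nat.div_pow (Nat.ordProj_dvd d p)]

lemma two_pow_mul_ordCompl_gcd_sq_dvd_pow_sub_one {n e : ℕ} (hn : 1 < n) (hodd : Odd n)
    (he0 : e ≠ 0) (he : Even e) :
    2 ^ padicValNat 2 (4 * e) * ordCompl[2] ((n - 1).gcd e) ^ 2 ∣ n ^ e - 1 := by
  have hcoprime : Nat.Coprime (2 ^ padicValNat 2 (4 * e)) (ordCompl[2] ((n - 1).gcd e) ^ 2) :=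
    (Nat.coprime_ordCompl Nat.prime_two (Nat.gcd_ne_zero_right he0)).pow _ _
  have hsq : ordCompl[2] ((n - 1).gcd e) ^ 2 ∣ n ^ e - 1 := by
    simpa only [one_pow] using (pow_dvd_pow_of_dvd (Nat.ordCompl_dvd ((n - 1).gcd e) 2) 2).trans
      (gcd_sub_sq_dvd_pow_sub_pow n 1 e)
  exact hcoprime.mul_dvd_of_dvd_of_dvd
    (two_pow_padicValNat_four_mul_dvd_pow_sub_one hn hodd he0 he) hsq

theorem stmt_11_general {n e d m k : ℕ} (hn : 1 < n) (hodd : Odd n) (he0 : e ≠ 0) (he : Even e)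
    (hd : d = Nat.gcd (n - 1) e)
    (hm : m = 2 ^ padicValNat 2 (4 * e) * d ^ 2 / 2 ^ (2 * padicValNat 2 d))
    (hcos : rad n < cosocle m) (hk : 0 < k) :
    IsABCTriple 1 (n ^ (e * k) - 1) (n ^ (e * k)) := by
  have hek : e * k ≠ 0 := mul_ne_zero he0 hk.ne'
  have hm_dvd : m ∣ n ^ e - 1 := by
    rw [hm, mul_pow_div_pow_mul_padicValNat Nat.prime_two, hd]
    exact two_pow_mul_ordCompl_gcd_sq_dvd_pow_sub_one hn hodd he0 he
  have hdvd : n ^ e - 1 ∣ n ^ (e * k) - 1 := Nat.pow_sub_one_dvd_pow_sub_one n (dvd_mul_right e k)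
  exact isABCTriple_one_sub_one (Nat.one_lt_pow hek hn) (hm_dvd.trans hdvd)
    (by rwa [rad_pow n hek])

theorem stmt_11 (n : ℕ) (hn : 1 < n) (hodd : Odd n)
    (d : ℕ) (hd : d = Nat.gcd (n - 1) (Nat.totient n))
    (m : ℕ)
    (hm : m = 2 ^ padicValNat 2 (4 * Nat.totient n) * d ^ 2 / 2 ^ (2 * padicValNat 2 d))
    (hcos : rad n < cosocle m) :
    ∀ k : ℕ, 0 < k →
      IsABCTriple 1 (n ^ (Nat.totient n * k) - 1) (n ^ (Nat.totient n * k)) := by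
  have hn2 : 2 < n := by
    obtain ⟨j, rfl⟩ := hodd
    lia
  exact fun k hk => stmt_11_general hn hodd (Nat.totient_pos.2 (by lia)).ne'
    (Nat.totient_even hn2) hd hm hcos hk
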